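/- arXiv:2401.14380 — 2 statements merged into one kernel-verified Lean document; each statement's English description precedes it below -/
import Mathlib

section
/- Let Γ be a tree on [n]. Then the coset splines generate Splines(Γ) as a ℂ[t]-module under the left action: every spline ρ on Γ can be written as a finite sum ρ = Σ c_{w,B} . f̄_w^B with coefficients c_{w,B} ∈ ℂ[t], where w ranges over S_n and B over subsets of E(Γ). -/
/-!
Write `E` for the set of edges. Replacing `ρ` by `w ↦ w⁻¹(ρ(w))` turns the spline condition at `w`
and an edge `{i, j}` into a congruence between the values at `w` and `w (i, j)` modulo the fixed
linear form `X i - X j`, and turns the coset spline of `B` at `u` into the constant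
`∏ p ∈ E \ B, (X p.1 - X p.2)` supported on the coset `u⟨B⟩`.

The argument is a descending induction along the filtration of `ℂ[t]` by the ideals `I_m` generated
by the products of `m` distinct edge forms. If the untwisted values lie in `I_m`, write
them as `∑ A, c_A(w) ∏ p ∈ A, (X p.1 - X p.2)` over the `m`-subsets `A` of `E`. Modulo the forms of
`E \ A` only the term of `A` survives. In a forest these forms generate a prime ideal containing no
form of `A`, so `c_A` is constant on the cosets of `⟨E \ A⟩` modulo that ideal, and a
combination of coset splines removes the term of `A` up to `I_{m+1}`.
-/

open MvPolynomial

/-- A spline on a simple graph `Γ` on `[n]`. -/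
def IsSpline {n : ℕ} (Γ : SimpleGraph (Fin n))
    (ρ : Equiv.Perm (Fin n) → MvPolynomial (Fin n) ℂ) : Prop :=
  ∀ (w : Equiv.Perm (Fin n)) (i j : Fin n), Γ.Adj i j →
    ρ w - ρ (w * Equiv.swap i j) ∈
      Ideal.span {(X (w i) - X (w j) : MvPolynomial (Fin n) ℂ)}

open Classical in
/-- The edges of `Γ`, recorded as ordered pairs `(i,j)` with `i < j`. -/
noncomputable def orderedEdges {n : ℕ} (Γ : SimpleGraph (Fin n)) :
    Finset (Fin n × Fin n) :=
  Finset.univ.filter fun p => Γ.Adj p.1 p.2 ∧ p.1 < p.2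

/-- The subgroup `⟨B⟩` of `S_n` generated by the transpositions corresponding to the
edges in `B`. -/
def edgeSubgroup {n : ℕ} (B : Finset (Fin n × Fin n)) : Subgroup (Equiv.Perm (Fin n)) :=
  Subgroup.closure {σ : Equiv.Perm (Fin n) | ∃ p ∈ B, σ = Equiv.swap p.1 p.2}

open Classical in
/-- The coset spline at the identity for `B ⊆ E(Γ)`:
`f̄_e^B(w) = ∏_{(i,j) ∈ E∖B, i<j} (t_{w(i)} − t_{w(j)})` if `w ∈ ⟨B⟩`, else `0`. -/
noncomputable def cosetSplineId {n : ℕ} (Γ : SimpleGraph (Fin n))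
    (B : Finset (Fin n × Fin n)) :
    Equiv.Perm (Fin n) → MvPolynomial (Fin n) ℂ := fun w =>
  if w ∈ edgeSubgroup B then
    ∏ p ∈ orderedEdges Γ \ B, (X (w p.1) - X (w p.2))
  else 0

/-- The dot action of `S_n`: `(w·ρ)(v) = w(ρ(w⁻¹ v))`. -/
noncomputable def dotAction {n : ℕ} (w : Equiv.Perm (Fin n))
    (ρ : Equiv.Perm (Fin n) → MvPolynomial (Fin n) ℂ) :
    Equiv.Perm (Fin n) → MvPolynomial (Fin n) ℂ :=
  fun v => rename (⇑w) (ρ (w⁻¹ * v))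

/-- The coset spline at `w`: `f̄_w^B = w · f̄_e^B`. -/
noncomputable def cosetSpline {n : ℕ} (Γ : SimpleGraph (Fin n))
    (w : Equiv.Perm (Fin n)) (B : Finset (Fin n × Fin n)) :
    Equiv.Perm (Fin n) → MvPolynomial (Fin n) ℂ :=
  dotAction w (cosetSplineId Γ B)

lemma apply_mul_eq_of_mem_closure {G α : Type*} [Group G] {S : Set G} {F : G → α}
    (hF : ∀ g, ∀ s ∈ S, F (g * s) = F g) {h : G} (hh : h ∈ Subgroup.closure S) (g : G) :
    F (g * h) = F g := by
  induction hh using Subgroup.closure_induction generalizing g with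
  | mem s hs => exact hF g s hs
  | one => rw [mul_one]
  | mul a b _ _ ha hb => rw [← mul_assoc, hb, ha]
  | inv a _ ha => rw [← ha (g * a⁻¹), inv_mul_cancel_right]

lemma rename_mul_inv {σ R : Type*} [CommSemiring R] (w s : Equiv.Perm σ) (f : MvPolynomial σ R) :
    rename ⇑(w * s)⁻¹ f = rename ⇑s⁻¹ (rename ⇑w⁻¹ f) := by
  rw [rename_rename, mul_inv_rev, Equiv.Perm.coe_mul]

section SquarefreeProducts

variable {ι R : Type*} [CommRing R]

/-- The ideal generated by the products `∏ p ∈ A, x p` over the `m`-element subsets `A` of `E`;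
these ideals form the filtration along which splines are decomposed. -/
def squarefreeProductIdeal (x : ι → R) (E : Finset ι) (m : ℕ) : Ideal R :=
  Ideal.span ((fun A : Finset ι => ∏ p ∈ A, x p) '' (E.powersetCard m : Set (Finset ι)))

variable {x : ι → R} {E A : Finset ι} {m : ℕ}

lemma squarefreeProductIdeal_zero : squarefreeProductIdeal x E 0 = ⊤ := by
  simp [squarefreeProductIdeal]

lemma squarefreeProductIdeal_eq_bot (hm : E.card < m) : squarefreeProductIdeal x E m = ⊥ := by
  simp [squarefreeProductIdeal, Finset.powersetCard_eq_empty.2 hm]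

lemma exists_sum_eq_of_mem_squarefreeProductIdeal {a : R}
    (ha : a ∈ squarefreeProductIdeal x E m) :
    ∃ c : Finset ι → R, ∑ A ∈ E.powersetCard m, c A * ∏ p ∈ A, x p = a := by
  obtain ⟨c, hc, rfl⟩ := (Finsupp.mem_span_image_iff_linearCombination R).1 ha
  exact ⟨c, (Finsupp.sum_of_support_subset c hc (fun A a => a * ∏ p ∈ A, x p)
    fun _ _ => zero_mul _).symm⟩

variable [DecidableEq ι]

lemma mul_prod_mem_squarefreeProductIdeal_succ {a : R} (hA : A ∈ E.powersetCard m)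
    (ha : a ∈ Ideal.span (x '' ↑(E \ A))) :
    a * ∏ p ∈ A, x p ∈ squarefreeProductIdeal x E (m + 1) := by
  rw [Finset.mem_powersetCard] at hA
  suffices h : Ideal.span (x '' ↑(E \ A)) ≤ Submodule.comap
      (LinearMap.mulRight R (∏ p ∈ A, x p)) (squarefreeProductIdeal x E (m + 1)) from h ha
  rw [Ideal.span_le]
  rintro _ ⟨p, hp, rfl⟩
  obtain ⟨hpE, hpA⟩ := Finset.mem_sdiff.1 hp
  refine Ideal.subset_span ⟨insert p A, ?_, Finset.prod_insert hpA⟩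
  exact Finset.mem_powersetCard.2
    ⟨Finset.insert_subset hpE hA.1, by rw [Finset.card_insert_of_notMem hpA, hA.2]⟩

lemma coeff_mem_of_sum_mul_prod_mem {c : Finset ι → R} (hA : A ∈ E.powersetCard m)
    (hprime : (Ideal.span (x '' ↑(E \ A))).IsPrime)
    (hx : ∀ p ∈ A, x p ∉ Ideal.span (x '' ↑(E \ A)))
    (hc : ∑ A' ∈ E.powersetCard m, c A' * ∏ p ∈ A', x p ∈ Ideal.span (x '' ↑(E \ A))) :
    c A ∈ Ideal.span (x '' ↑(E \ A)) := by
  have others_mem : ∀ A' ∈ (E.powersetCard m).erase A,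
      c A' * ∏ p ∈ A', x p ∈ Ideal.span (x '' ↑(E \ A)) := by
    intro A' hA'
    obtain ⟨hne, hA'⟩ := Finset.mem_erase.1 hA'
    rw [Finset.mem_powersetCard] at hA hA'
    obtain ⟨p, hpA', hpA⟩ : ∃ p ∈ A', p ∉ A := Finset.not_subset.1 fun hsub =>
      hne (Finset.eq_of_subset_of_card_le hsub (hA.2.trans hA'.2.symm).le)
    exact Ideal.mul_mem_left _ _ (Ideal.mem_of_dvd _ (Finset.dvd_prod_of_mem x hpA')
      (Ideal.subset_span ⟨p, Finset.mem_sdiff.2 ⟨hA'.1 hpA', hpA⟩, rfl⟩))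
  have term_mem : c A * ∏ p ∈ A, x p ∈ Ideal.span (x '' ↑(E \ A)) := by
    rw [← Finset.add_sum_erase _ _ hA] at hc
    exact (Ideal.add_mem_iff_left _ (Ideal.sum_mem _ others_mem)).1 hc
  refine (hprime.mem_or_mem term_mem).resolve_right fun hprod => ?_
  obtain ⟨p, hp, hxp⟩ := hprime.prod_mem_iff.1 hprod
  exact hx p hp hxp

end SquarefreeProducts

section EdgeForms

variable {σ R : Type*} [CommRing R]

/-- The linear form `X i - X j` labelling the ordered pair `(i, j)`. -/
noncomputable def edgeForm (p : σ × σ) : MvPolynomial σ R :=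
  X p.1 - X p.2

theorem ker_rename_quotMk (B : Set (σ × σ)) :
    RingHom.ker (rename (R := R) (Quot.mk fun i j => (i, j) ∈ B)) =
      Ideal.span (edgeForm '' B) := by
  set J : Ideal (MvPolynomial σ R) := Ideal.span (edgeForm '' B)
  apply le_antisymm
  · -- Variables paired in `B` agree modulo `J`, so reduction modulo `J` factors through `rename`.
    let descend : MvPolynomial (Quot fun i j => (i, j) ∈ B) R →ₐ[R] MvPolynomial σ R ⧸ J :=
      aeval (Quot.lift (fun i => Ideal.Quotient.mk J (X i)) fun i j hij =>
        Ideal.Quotient.eq.2 (Ideal.subset_span ⟨(i, j), hij, rfl⟩))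
    have hfactor : descend.comp (rename (Quot.mk _)) = Ideal.Quotient.mkₐ R J :=
      algHom_ext fun i => by simp [descend]
    intro f hf
    rw [← Ideal.Quotient.eq_zero_iff_mem, ← Ideal.Quotient.mkₐ_eq_mk R, ← hfactor,
      AlgHom.comp_apply, RingHom.mem_ker.1 hf, map_zero]
  · rw [Ideal.span_le]
    rintro _ ⟨p, hp, rfl⟩
    simp only [edgeForm, SetLike.mem_coe, RingHom.mem_ker, map_sub, rename_X, sub_eq_zero]
    exact congrArg X (Quot.sound hp)

theorem isPrime_span_edgeForm [IsDomain R] (B : Set (σ × σ)) :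
    (Ideal.span (edgeForm (R := R) '' B)).IsPrime := by
  rw [← ker_rename_quotMk]
  exact RingHom.ker_isPrime _

theorem edgeForm_mem_span_iff [Nontrivial R] {B : Set (σ × σ)} {p : σ × σ} :
    edgeForm p ∈ Ideal.span (edgeForm (R := R) '' B) ↔
      Relation.EqvGen (fun i j => (i, j) ∈ B) p.1 p.2 := by
  rw [← ker_rename_quotMk, RingHom.mem_ker, edgeForm, map_sub, rename_X, rename_X, sub_eq_zero,
    (X_injective (σ := Quot _) (R := R)).eq_iff, Quot.eq]

theorem rename_swap_sub_self_mem_span_edgeForm [DecidableEq σ] {B : Set (σ × σ)} {p : σ × σ}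
    (hp : p ∈ B) (f : MvPolynomial σ R) :
    rename (Equiv.swap p.1 p.2) f - f ∈ Ideal.span (edgeForm '' B) := by
  have hmk : Quot.mk (fun i j => (i, j) ∈ B) p.1 = Quot.mk _ p.2 := Quot.sound hp
  rw [← ker_rename_quotMk, RingHom.mem_ker, map_sub, rename_rename, Equiv.comp_swap_eq_update,
    hmk, Function.update_eq_self, ← hmk, Function.update_eq_self, sub_self]

theorem edgeForm_dvd_rename_swap_sub_self [DecidableEq σ] (p : σ × σ) (f : MvPolynomial σ R) :
    edgeForm p ∣ rename (Equiv.swap p.1 p.2) f - f := by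
  simpa only [Set.image_singleton, Ideal.mem_span_singleton] using
    rename_swap_sub_self_mem_span_edgeForm (Set.mem_singleton p) f

end EdgeForms

section Edges

variable {n : ℕ} {Γ : SimpleGraph (Fin n)} {B : Finset (Fin n × Fin n)} {p : Fin n × Fin n}

lemma mem_orderedEdges : p ∈ orderedEdges Γ ↔ Γ.Adj p.1 p.2 ∧ p.1 < p.2 := by
  simp [orderedEdges]

lemma edgeForm_notMem_span_of_isAcyclic {R : Type*} [CommRing R] [Nontrivial R]
    (hΓ : Γ.IsAcyclic) (hB : B ⊆ orderedEdges Γ) (hp : p ∈ orderedEdges Γ) (hpB : p ∉ B) :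
    edgeForm p ∉ Ideal.span (edgeForm (R := R) '' B) := by
  rw [edgeForm_mem_span_iff]
  intro h
  obtain ⟨hadj, hlt⟩ := mem_orderedEdges.1 hp
  have deleted_adj : ∀ i j, (i, j) ∈ B → (Γ.deleteEdges {s(p.1, p.2)}).Adj i j := by
    intro i j hij
    obtain ⟨hij_adj, hij_lt⟩ := mem_orderedEdges.1 (hB hij)
    refine SimpleGraph.deleteEdges_adj.2 ⟨hij_adj, fun heq => ?_⟩
    rcases Sym2.eq_iff.1 heq with ⟨rfl, rfl⟩ | ⟨rfl, rfl⟩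
    · exact hpB hij
    · exact lt_asymm hij_lt hlt
  refine SimpleGraph.isAcyclic_iff_forall_adj_isBridge.1 hΓ hadj ?_
  exact SimpleGraph.reachable_is_equivalence _ |>.eqvGen_iff.1
    (h.mono fun i j hij => (deleted_adj i j hij).reachable)

lemma swap_mem_edgeSubgroup (hp : p ∈ B) : Equiv.swap p.1 p.2 ∈ edgeSubgroup B :=
  Subgroup.subset_closure ⟨p, hp, rfl⟩

end Edges

section Untwist

variable {n : ℕ} {Γ : SimpleGraph (Fin n)}

/-- The automorphism `ρ ↦ (w ↦ w⁻¹(ρ(w)))` of the algebra of functions `S_n → ℂ[t]`. It makes the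
ideals in the spline condition independent of `w`. -/
noncomputable def untwist :
    (Equiv.Perm (Fin n) → MvPolynomial (Fin n) ℂ) ≃ₐ[ℂ]
      (Equiv.Perm (Fin n) → MvPolynomial (Fin n) ℂ) :=
  AlgEquiv.piCongrRight fun w => renameEquiv ℂ w⁻¹

lemma untwist_apply (ρ : Equiv.Perm (Fin n) → MvPolynomial (Fin n) ℂ) (w : Equiv.Perm (Fin n)) :
    untwist ρ w = rename ⇑w⁻¹ (ρ w) :=
  rfl

lemma sub_mul_swap_mem_span_iff (ρ : Equiv.Perm (Fin n) → MvPolynomial (Fin n) ℂ)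
    (w : Equiv.Perm (Fin n)) (i j : Fin n) :
    ρ w - ρ (w * Equiv.swap i j) ∈ Ideal.span {(X (w i) - X (w j) : MvPolynomial (Fin n) ℂ)} ↔
      edgeForm (i, j) ∣ untwist ρ w - untwist ρ (w * Equiv.swap i j) := by
  have hmod : edgeForm (i, j) ∣
      untwist ρ (w * Equiv.swap i j) - rename ⇑w⁻¹ (ρ (w * Equiv.swap i j)) := by
    rw [untwist_apply, rename_mul_inv, Equiv.swap_inv]
    exact edgeForm_dvd_rename_swap_sub_self (i, j) _
  have hform : renameEquiv ℂ w⁻¹ (X (w i) - X (w j)) = edgeForm (i, j) := by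
    simp [edgeForm]
  calc ρ w - ρ (w * Equiv.swap i j) ∈ Ideal.span {X (w i) - X (w j)}
    _ ↔ edgeForm (i, j) ∣ untwist ρ w - rename ⇑w⁻¹ (ρ (w * Equiv.swap i j)) := by
      rw [Ideal.mem_span_singleton, ← map_dvd_iff (renameEquiv ℂ w⁻¹), hform, map_sub]
      rfl
    _ ↔ edgeForm (i, j) ∣ untwist ρ w - untwist ρ (w * Equiv.swap i j) := by
      refine (dvd_iff_dvd_of_dvd_sub ?_).symm
      rw [sub_sub_sub_cancel_left, dvd_sub_comm]
      exact hmod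

theorem isSpline_iff_edgeForm_dvd {ρ : Equiv.Perm (Fin n) → MvPolynomial (Fin n) ℂ} :
    IsSpline Γ ρ ↔ ∀ w, ∀ p ∈ orderedEdges Γ,
      edgeForm p ∣ untwist ρ w - untwist ρ (w * Equiv.swap p.1 p.2) := by
  constructor
  · intro hρ w p hp
    exact (sub_mul_swap_mem_span_iff ρ w p.1 p.2).1 (hρ w _ _ (mem_orderedEdges.1 hp).1)
  · intro h w i j hij
    rcases hij.ne.lt_or_gt with hlt | hlt
    · exact (sub_mul_swap_mem_span_iff ρ w i j).2 (h w (i, j) (mem_orderedEdges.2 ⟨hij, hlt⟩))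
    · rw [← neg_sub (X (w j)), Ideal.span_singleton_neg, Equiv.swap_comm]
      exact (sub_mul_swap_mem_span_iff ρ w j i).2 (h w (j, i) (mem_orderedEdges.2 ⟨hij.symm, hlt⟩))

end Untwist

section CosetSplines

variable {n : ℕ} {Γ : SimpleGraph (Fin n)} {A B : Finset (Fin n × Fin n)} {m : ℕ}

/-- The `ℂ[t]`-module `Splines(Γ)` under the left action. -/
def splines (Γ : SimpleGraph (Fin n)) :
    Submodule (MvPolynomial (Fin n) ℂ) (Equiv.Perm (Fin n) → MvPolynomial (Fin n) ℂ) where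
  carrier := {ρ | IsSpline Γ ρ}
  zero_mem' := fun w i j _ => by simp
  add_mem' := fun hρ hρ' w i j hij => by
    simpa only [Pi.add_apply, add_sub_add_comm] using add_mem (hρ w i j hij) (hρ' w i j hij)
  smul_mem' := fun f ρ hρ w i j hij => by
    simpa only [Pi.smul_apply, smul_eq_mul, mul_sub] using Ideal.mul_mem_left _ f (hρ w i j hij)

/-- The coset splines `f̄_w^B` for `w ∈ S_n` and `B ⊆ E(Γ)`. -/
def cosetSplines (Γ : SimpleGraph (Fin n)) :
    Set (Equiv.Perm (Fin n) → MvPolynomial (Fin n) ℂ) :=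
  {f | ∃ (w : Equiv.Perm (Fin n)) (B : Finset (Fin n × Fin n)),
    B ⊆ orderedEdges Γ ∧ f = cosetSpline Γ w B}

open Classical in
lemma untwist_cosetSpline (Γ : SimpleGraph (Fin n)) (u : Equiv.Perm (Fin n))
    (B : Finset (Fin n × Fin n)) (w : Equiv.Perm (Fin n)) :
    untwist (cosetSpline Γ u B) w =
      if (u : Equiv.Perm (Fin n) ⧸ edgeSubgroup B) = w then ∏ p ∈ orderedEdges Γ \ B, edgeForm p
      else 0 := by
  simp only [untwist_apply, cosetSpline, dotAction, cosetSplineId, QuotientGroup.eq]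
  split_ifs <;> simp [edgeForm, map_prod]

theorem isSpline_cosetSpline (Γ : SimpleGraph (Fin n)) (u : Equiv.Perm (Fin n))
    (B : Finset (Fin n × Fin n)) : IsSpline Γ (cosetSpline Γ u B) := by
  refine isSpline_iff_edgeForm_dvd.2 fun w p hp => ?_
  simp only [untwist_cosetSpline]
  by_cases hpB : p ∈ B
  · have hcoset : ((w * Equiv.swap p.1 p.2 : Equiv.Perm (Fin n)) :
        Equiv.Perm (Fin n) ⧸ edgeSubgroup B) = w :=
      QuotientGroup.mk_mul_of_mem w (swap_mem_edgeSubgroup hpB)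
    rw [hcoset, sub_self]
    exact dvd_zero _
  · have hdvd : edgeForm p ∣ ∏ q ∈ orderedEdges Γ \ B, edgeForm (R := ℂ) q :=
      Finset.dvd_prod_of_mem _ (Finset.mem_sdiff.2 ⟨hp, hpB⟩)
    split_ifs <;> simp [hdvd]

theorem span_cosetSplines_le_splines (Γ : SimpleGraph (Fin n)) :
    Submodule.span (MvPolynomial (Fin n) ℂ) (cosetSplines Γ) ≤ splines Γ := by
  rw [Submodule.span_le]
  rintro _ ⟨u, B, -, rfl⟩
  exact isSpline_cosetSpline Γ u B

lemma exists_mem_span_untwist_eq (hB : B ⊆ orderedEdges Γ)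
    (a : Equiv.Perm (Fin n) ⧸ edgeSubgroup B → MvPolynomial (Fin n) ℂ) :
    ∃ τ ∈ Submodule.span (MvPolynomial (Fin n) ℂ) (cosetSplines Γ), ∀ w : Equiv.Perm (Fin n),
      untwist τ w = rename ⇑w⁻¹ (a w) * ∏ p ∈ orderedEdges Γ \ B, edgeForm p := by
  classical
  refine ⟨∑ C, a C • cosetSpline Γ C.out B, Submodule.sum_mem _ fun C _ =>
    Submodule.smul_mem _ _ (Submodule.subset_span ⟨C.out, B, hB, rfl⟩), fun w => ?_⟩
  have untwist_term : ∀ C, untwist (a C • cosetSpline Γ C.out B) w =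
      if C = w then rename ⇑w⁻¹ (a w) * ∏ p ∈ orderedEdges Γ \ B, edgeForm p else 0 := by
    intro C
    rw [untwist_apply, Pi.smul_apply, smul_eq_mul, map_mul, ← untwist_apply (cosetSpline _ _ _),
      untwist_cosetSpline, QuotientGroup.out_eq']
    split_ifs with hC <;> simp [hC]
  rw [map_sum, Finset.sum_apply, Finset.sum_congr rfl fun C _ => untwist_term C]
  simp

lemma exists_coset_coefficients {f : Equiv.Perm (Fin n) → MvPolynomial (Fin n) ℂ}
    (hf : ∀ w, ∀ p ∈ B, f w - f (w * Equiv.swap p.1 p.2) ∈ Ideal.span (edgeForm '' ↑B)) :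
    ∃ a : Equiv.Perm (Fin n) ⧸ edgeSubgroup B → MvPolynomial (Fin n) ℂ,
      ∀ w : Equiv.Perm (Fin n), f w - rename ⇑w⁻¹ (a w) ∈ Ideal.span (edgeForm '' ↑B) := by
  refine ⟨fun C => rename ⇑C.out (f C.out), fun w => ?_⟩
  obtain ⟨h, hw⟩ := QuotientGroup.mk_out_eq_mul (edgeSubgroup B) w
  set u := (w : Equiv.Perm (Fin n) ⧸ edgeSubgroup B).out
  set J : Ideal (MvPolynomial (Fin n) ℂ) := Ideal.span (edgeForm '' ↑B)
  let residue (v : Equiv.Perm (Fin n)) : MvPolynomial (Fin n) ℂ ⧸ J :=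
    Ideal.Quotient.mk J (f v - rename ⇑v⁻¹ (rename ⇑u (f u)))
  have residue_mul_swap : ∀ v, ∀ s ∈ {s | ∃ p ∈ B, s = Equiv.swap p.1 p.2},
      residue (v * s) = residue v := by
    rintro v _ ⟨p, hp, rfl⟩
    refine (Ideal.Quotient.eq.2 ?_).symm
    rw [sub_sub_sub_comm, rename_mul_inv, Equiv.swap_inv]
    exact sub_mem (hf v p hp) (sub_mem_comm_iff.1 (rename_swap_sub_self_mem_span_edgeForm hp _))
  have residue_eq : residue w = residue u := by
    rw [hw]
    exact (apply_mul_eq_of_mem_closure residue_mul_swap h.2 w).symm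
  rw [← Ideal.Quotient.eq_zero_iff_mem]
  refine residue_eq.trans ?_
  simp [residue, rename_rename]

lemma exists_mem_span_approximating_term {f : Equiv.Perm (Fin n) → MvPolynomial (Fin n) ℂ}
    (hA : A ∈ (orderedEdges Γ).powersetCard m)
    (hf : ∀ w, ∀ p ∈ orderedEdges Γ \ A,
      f w - f (w * Equiv.swap p.1 p.2) ∈ Ideal.span (edgeForm '' ↑(orderedEdges Γ \ A))) :
    ∃ τ ∈ Submodule.span (MvPolynomial (Fin n) ℂ) (cosetSplines Γ), ∀ w,
      f w * ∏ p ∈ A, edgeForm p - untwist τ w ∈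
        squarefreeProductIdeal edgeForm (orderedEdges Γ) (m + 1) := by
  obtain ⟨a, ha⟩ := exists_coset_coefficients hf
  obtain ⟨τ, τ_mem, hτ⟩ := exists_mem_span_untwist_eq Finset.sdiff_subset a
  refine ⟨τ, τ_mem, fun w => ?_⟩
  rw [hτ, Finset.sdiff_sdiff_eq_self (Finset.mem_powersetCard.1 hA).1, ← sub_mul]
  exact mul_prod_mem_squarefreeProductIdeal_succ hA (ha w)

theorem exists_mem_span_untwist_sub_mem_succ (hΓ : Γ.IsAcyclic)
    {ρ : Equiv.Perm (Fin n) → MvPolynomial (Fin n) ℂ} (hρ : IsSpline Γ ρ)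
    (hm : ∀ w, untwist ρ w ∈ squarefreeProductIdeal edgeForm (orderedEdges Γ) m) :
    ∃ σ ∈ Submodule.span (MvPolynomial (Fin n) ℂ) (cosetSplines Γ), ∀ w,
      untwist (ρ - σ) w ∈ squarefreeProductIdeal edgeForm (orderedEdges Γ) (m + 1) := by
  set E := orderedEdges Γ
  choose c hc using fun w => exists_sum_eq_of_mem_squarefreeProductIdeal (hm w)
  have coeff_congr : ∀ A ∈ E.powersetCard m, ∀ w, ∀ p ∈ E \ A,
      c w A - c (w * Equiv.swap p.1 p.2) A ∈ Ideal.span (edgeForm '' ↑(E \ A)) := by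
    intro A hA w p hp
    have hpE := (Finset.mem_sdiff.1 hp).1
    have hAE := (Finset.mem_powersetCard.1 hA).1
    refine coeff_mem_of_sum_mul_prod_mem (c := fun A => c w A - c (w * Equiv.swap p.1 p.2) A) hA
      (isPrime_span_edgeForm _) (fun q hq => ?_) ?_
    · exact edgeForm_notMem_span_of_isAcyclic hΓ Finset.sdiff_subset (hAE hq) fun hq' =>
        (Finset.mem_sdiff.1 hq').2 hq
    · simp only [sub_mul, Finset.sum_sub_distrib, hc]
      exact Ideal.mem_of_dvd _ (isSpline_iff_edgeForm_dvd.1 hρ w p hpE)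
        (Ideal.subset_span ⟨p, hp, rfl⟩)
  choose! τ τ_mem hτ using fun A hA => exists_mem_span_approximating_term hA (coeff_congr A hA)
  refine ⟨∑ A ∈ E.powersetCard m, τ A, Submodule.sum_mem _ τ_mem, fun w => ?_⟩
  rw [map_sub, map_sum, Pi.sub_apply, Finset.sum_apply, ← hc, ← Finset.sum_sub_distrib]
  exact Ideal.sum_mem _ fun A hA => hτ A hA w

end CosetSplines

theorem spline_mem_span_cosetSplines_general {n : ℕ} {Γ : SimpleGraph (Fin n)} (hΓ : Γ.IsAcyclic)
    {ρ : Equiv.Perm (Fin n) → MvPolynomial (Fin n) ℂ} (hρ : IsSpline Γ ρ) :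
    ρ ∈ Submodule.span (MvPolynomial (Fin n) ℂ) (cosetSplines Γ) := by
  suffices descent : ∀ m ≤ (orderedEdges Γ).card + 1, ∀ ρ ∈ splines Γ,
      (∀ w, untwist ρ w ∈ squarefreeProductIdeal edgeForm (orderedEdges Γ) m) →
        ρ ∈ Submodule.span (MvPolynomial (Fin n) ℂ) (cosetSplines Γ) from
    descent 0 (Nat.zero_le _) ρ hρ fun w => by simp [squarefreeProductIdeal_zero]
  intro m hm
  induction hm using Nat.decreasingInduction with
  | self =>
    intro ρ _ hρ
    simp only [squarefreeProductIdeal_eq_bot (Nat.lt_succ_self _), Ideal.mem_bot] at hρ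
    rw [(map_eq_zero_iff untwist untwist.injective).1 (funext hρ)]
    exact Submodule.zero_mem _
  | of_succ m _ ih =>
    intro ρ hρ hρm
    obtain ⟨σ, hσ, hρσ⟩ := exists_mem_span_untwist_sub_mem_succ hΓ hρ hρm
    have sub_mem_splines := sub_mem hρ (span_cosetSplines_le_splines Γ hσ)
    exact (Submodule.sub_mem_iff_left _ hσ).1 (ih (ρ - σ) sub_mem_splines hρσ)

/-- If `Γ` is a tree, then the coset splines generate the splines on `Γ` as a module over
`ℂ[t₁,…,tₙ]` (acting pointwise, i.e. via the left action): every spline lies in the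
`ℂ[t]`-span of the coset splines `f̄_w^B`, `w ∈ S_n`, `B ⊆ E(Γ)`. -/
theorem spline_mem_span_cosetSplines {n : ℕ} (Γ : SimpleGraph (Fin n)) (hT : Γ.IsTree)
    (ρ : Equiv.Perm (Fin n) → MvPolynomial (Fin n) ℂ) (hρ : IsSpline Γ ρ) :
    ρ ∈ Submodule.span (MvPolynomial (Fin n) ℂ)
      {f : Equiv.Perm (Fin n) → MvPolynomial (Fin n) ℂ |
        ∃ (w : Equiv.Perm (Fin n)) (B : Finset (Fin n × Fin n)),
          B ⊆ orderedEdges Γ ∧ f = cosetSpline Γ w B} :=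
  spline_mem_span_cosetSplines_general hT.isAcyclic hρ
end

section
/- Let Γ be a connected simple graph on [n]. Then every spline ρ ∈ Splines(Γ)^1 (i.e., all values ρ(w) homogeneous linear or zero) is a ℂ-linear combination of the splines in F_Γ := {t̄_i : i ∈ [n]} ∪ {x̄_i : i ∈ [n]} ∪ {f̄_A^s : s = {i,j} a cut edge of Γ with i < j, A ⊆ [n], |A| = |V(G_s)|} ∪ {ȳ_{G,k}^j : j a cut vertex of Γ, G a connected component of Γ − j, k ∈ [n]}. -/
open MvPolynomial

/-- The spline with constant value `t_i`. -/
noncomputable def tbar {n : ℕ} (i : Fin n) :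
    Equiv.Perm (Fin n) → MvPolynomial (Fin n) ℂ := fun _ => X i

/-- The spline `x̄_i : w ↦ t_{w(i)}`. -/
noncomputable def xbar {n : ℕ} (i : Fin n) :
    Equiv.Perm (Fin n) → MvPolynomial (Fin n) ℂ := fun w => X (w i)

/-- The graph obtained from `Γ` by deleting all edges incident to the vertex `j`. -/
def delVertexEdges {n : ℕ} (Γ : SimpleGraph (Fin n)) (j : Fin n) : SimpleGraph (Fin n) :=
  Γ.deleteEdges {e : Sym2 (Fin n) | j ∈ e}

open Classical in
/-- The spline `f̄_A^s` associated to a cut edge `s = {i,j}` with `i < j`, a connected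
component `G` of the edge-deleted graph, and a set `A` with `|A| = |V(G)|`. -/
noncomputable def fbar {n : ℕ} (i j : Fin n) (A : Set (Fin n)) (G : Set (Fin n)) :
    Equiv.Perm (Fin n) → MvPolynomial (Fin n) ℂ := fun w =>
  if (⇑w) ⁻¹' A = G then X (w i) - X (w j) else 0

open Classical in
/-- The spline `ȳ_{G,k}^j` associated to a cut vertex `j`, a connected component `G` of
`Γ − j`, and `k ∈ [n]`. -/
noncomputable def ybar {n : ℕ} (j k : Fin n) (G : Set (Fin n)) :
    Equiv.Perm (Fin n) → MvPolynomial (Fin n) ℂ := fun w =>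
  if w⁻¹ k ∈ G then X k - X (w j) else 0

/-- The collection `F_Γ` of linear splines: the `t̄_i`, the `x̄_i`, the cut-edge splines
`f̄_A^s` (with `G_s` the component of the edge-deleted graph containing the smaller
endpoint `i`), and the cut-vertex splines `ȳ_{G,k}^j`. -/
def SpanningFamily {n : ℕ} (Γ : SimpleGraph (Fin n)) :
    Set (Equiv.Perm (Fin n) → MvPolynomial (Fin n) ℂ) :=
  {f | ∃ i : Fin n, f = tbar i} ∪
  {f | ∃ i : Fin n, f = xbar i} ∪
  {f | ∃ i j : Fin n, i < j ∧ Γ.Adj i j ∧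
      ¬ (Γ.deleteEdges {s(i, j)}).Connected ∧
      ∃ A : Set (Fin n),
        A.ncard = {y | (Γ.deleteEdges {s(i, j)}).Reachable i y}.ncard ∧
        f = fbar i j A {y | (Γ.deleteEdges {s(i, j)}).Reachable i y}} ∪
  {f | ∃ j : Fin n, ¬ (Γ.induce ({j}ᶜ : Set (Fin n))).Connected ∧
      ∃ v₀ : Fin n, v₀ ≠ j ∧ ∃ k : Fin n,
        f = ybar j k {y | (delVertexEdges Γ j).Reachable v₀ y}}

/-!
Write `ρ(w) = ∑ v, φ_v(w) t_{w(v)}`. The spline condition on an edge `{i, j}` says that passing from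
`w` to `w (i, j)` changes neither `φ_v` for `v ≠ i, j` nor the total `∑ v, φ_v`. Hence the sum of
the `φ_v` over a set `G` of vertices is only affected by the edges leaving `G`.

If `G` is one side of a cut edge, that sum therefore depends only on the set `w(G)`, and subtracting
a combination of the `f̄_A^s` makes the coefficients constant along the cut edge.

If `G` is a component of `Γ − p`, there are then two cases. A single edge from `p` to `G` is a cut
edge, along which nothing changes any more. With two edges `{p, j}` and `{p, k}`, the change along
`{p, j}` depends only on the labels `w(p)` and `w(j)` and is a cocycle in them, so it equals
`d(w(j)) − d(w(p))` for some `d`. In both cases the sum over `G` is `∑ v ∈ G, d(w(v))` up to a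
constant. As `φ_p` is the constant total minus these sums, subtracting combinations of the
`ȳ_{G,k}^p` leaves coefficients `φ_v(w) = E_v(w(v))`, and the spline conditions force
`E_v(a) = d(a) + c(v)`: a combination of the `t̄_a` and the `x̄_v`.
-/

open Equiv

namespace LinearSpline

section Invariance

variable {α R V : Type*} [Group α]

/-- The subgroup of all `g` such that `f` is invariant under right translation by `g`. The spline
conditions say that certain functions of a permutation have certain transpositions in this
subgroup. -/
def rightStabilizer (f : α → R) : Subgroup α where
  carrier := {g | ∀ w, f (w * g) = f w}
  mul_mem' ha hb w := by rw [← mul_assoc, hb, ha]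
  one_mem' w := by rw [mul_one]
  inv_mem' {g} hg w := by rw [← hg (w * g⁻¹), inv_mul_cancel_right]

lemma mem_rightStabilizer {f : α → R} {g : α} :
    g ∈ rightStabilizer f ↔ ∀ w, f (w * g) = f w :=
  Iff.rfl

lemma mem_rightStabilizer_sub [Sub R] {f f' : α → R} {g : α} (hf : g ∈ rightStabilizer f)
    (hf' : g ∈ rightStabilizer f') : g ∈ rightStabilizer (f - f') :=
  fun w => congrArg₂ (· - ·) (hf w) (hf' w)

variable [DecidableEq V]

lemma mem_of_forall_swap_mem [Finite V] {H : Subgroup (Perm V)} {π : Perm V}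
    (h : ∀ x, swap x (π x) ∈ H) : π ∈ H := by
  have hS : ∀ σ ∈ {σ : Perm V | σ ∈ H ∧ σ.IsSwap}, σ.IsSwap := fun _ => And.right
  refine (Subgroup.closure_le H).2 (fun _ => And.left)
    ((mem_closure_isSwap hS).2 ⟨Set.toFinite _, fun x => (swap_mem_closure_isSwap hS).1 ?_⟩)
  rcases eq_or_ne (π x) x with hx | hx
  · rw [hx, swap_self]
    exact one_mem _
  · exact Subgroup.subset_closure ⟨swap_comm x (π x) ▸ h x, _, _, hx, rfl⟩

lemma eq_of_forall_swap_mem [Finite V] {f : Perm V → R} {w w' : Perm V}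
    (h : ∀ x, swap x ((w⁻¹ * w') x) ∈ rightStabilizer f) : f w' = f w := by
  simpa using mem_of_forall_swap_mem h w

lemma swap_mem_of_reachable {H : Subgroup (Perm V)} {Γ : SimpleGraph V} {u v : V}
    (hΓ : ∀ a b, Γ.Adj a b → swap a b ∈ H) (h : Γ.Reachable u v) : swap u v ∈ H := by
  obtain ⟨q⟩ := h
  induction q with
  | nil =>
    rw [swap_self]
    exact one_mem H
  | cons hab _ ih => exact SubmonoidClass.swap_mem_trans H (hΓ _ _ hab) ih

lemma swap_mem_of_boundary {H : Subgroup (Perm V)} {Γ : SimpleGraph V} {S : Set V} {p u : V}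
    (hΓ : Γ.Preconnected)
    (hS : ∀ a b, a ∈ S → b ∉ S → Γ.Adj a b → a = p)
    (hH : ∀ a b, a ∈ S → b ∈ S → Γ.Adj a b → swap a b ∈ H) (hu : u ∈ S) : swap u p ∈ H := by
  obtain ⟨q⟩ := hΓ u p
  induction q with
  | nil =>
    rw [swap_self]
    exact one_mem H
  | @cons a b c hab _ ih =>
    by_cases hb : b ∈ S
    · exact SubmonoidClass.swap_mem_trans H (hH a b hu hb hab) (ih hS hb)
    · rw [hS a b hu hb hab, swap_self]
      exact one_mem H

lemma exists_eq_const_of_forall_swap_mem [Finite V] {f : Perm V → R} {j : V}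
    (h : ∀ u, swap u j ∈ rightStabilizer f) : ∃ c, ∀ w, f w = c :=
  ⟨f 1, fun _ => eq_of_forall_swap_mem fun x =>
    SubmonoidClass.swap_mem_trans _ (h x) (swap_comm _ j ▸ h _)⟩

lemma swap_apply_mem_iff {G : Finset V} {u v : V} (h : u ∈ G ↔ v ∈ G) (x : V) :
    swap u v x ∈ G ↔ x ∈ G := by
  rw [swap_apply_def]
  split_ifs <;> simp_all

lemma swap_mem_rightStabilizer_sum_apply [AddCommMonoid R] (d : V → R) {G : Finset V} {u v : V}
    (h : u ∈ G ↔ v ∈ G) : swap u v ∈ rightStabilizer fun w : Perm V => ∑ x ∈ G, d (w x) :=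
  fun _ => Finset.sum_equiv (swap u v) (fun x => (swap_apply_mem_iff h x).symm) fun _ _ => rfl

end Invariance

section SwapDiff

variable {V R : Type*} [DecidableEq V]

/-- The difference of `f` along the edge `w — w (i j)` of the Cayley graph, as a function of its
starting point `w`. -/
def swapDiff [Sub R] (f : Perm V → R) (i j : V) (w : Perm V) : R :=
  f w - f (w * swap i j)

lemma swapDiff_comm [Sub R] (f : Perm V → R) (i j : V) : swapDiff f i j = swapDiff f j i := by
  unfold swapDiff
  rw [swap_comm]

lemma mem_rightStabilizer_swapDiff [Sub R] {f : Perm V → R} {i j : V} {π : Perm V}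
    (hf : π ∈ rightStabilizer f) (hi : π i = i) (hj : π j = j) :
    π ∈ rightStabilizer (swapDiff f i j) := by
  intro w
  have hcomm : π * swap i j = swap i j * π := by rw [mul_swap_eq_swap_mul, hi, hj]
  rw [swapDiff, mul_assoc, hcomm, ← mul_assoc, hf, hf, swapDiff]

lemma swapDiff_eq_of_apply_eq [Finite V] [Sub R] {f : Perm V → R} {p j : V}
    (h : ∀ u v, u ≠ p → u ≠ j → v ≠ p → v ≠ j → swap u v ∈ rightStabilizer (swapDiff f p j))
    {w w' : Perm V} (hp : w p = w' p) (hj : w j = w' j) :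
    swapDiff f p j w = swapDiff f p j w' := by
  refine eq_of_forall_swap_mem fun x => ?_
  have hfix : ∀ y, w y = w' y → (w'⁻¹ * w) y = y := fun y hy => by simp [hy]
  by_cases hx : x = p ∨ x = j
  · have : (w'⁻¹ * w) x = x := by rcases hx with rfl | rfl <;> exact hfix _ ‹_›
    rw [this, swap_self]
    exact one_mem _
  · rw [not_or] at hx
    exact h _ _ hx.1 hx.2 (fun e => hx.1 ((w'⁻¹ * w).injective (e.trans (hfix p hp).symm)))
      fun e => hx.2 ((w'⁻¹ * w).injective (e.trans (hfix j hj).symm))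

variable [AddCommGroup R]

lemma swap_mem_rightStabilizer_iff {f : Perm V → R} {i j : V} :
    swap i j ∈ rightStabilizer f ↔ swapDiff f i j = 0 := by
  simp only [mem_rightStabilizer, swapDiff, funext_iff, Pi.zero_apply, sub_eq_zero, eq_comm]

lemma swapDiff_sub (f g : Perm V → R) (i j : V) :
    swapDiff (f - g) i j = swapDiff f i j - swapDiff g i j :=
  funext fun _ => sub_sub_sub_comm _ _ _ _

lemma swapDiff_mul_swap (f : Perm V → R) (i j : V) (w : Perm V) :
    swapDiff f i j (w * swap i j) = -swapDiff f i j w := by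
  simp [swapDiff, mul_assoc]

lemma swapDiff_sum_apply (d : V → R) {G : Finset V} {i j : V} (hi : i ∉ G) (hj : j ∈ G) :
    swapDiff (fun w => ∑ x ∈ G, d (w x)) i j = fun w => d (w j) - d (w i) := by
  funext w
  have hrest : ∑ x ∈ G.erase j, d ((w * swap i j) x) = ∑ x ∈ G.erase j, d (w x) :=
    swap_mem_rightStabilizer_sum_apply d (by simp [hi]) w
  rw [swapDiff, ← Finset.add_sum_erase _ _ hj, ← Finset.add_sum_erase _ _ hj, hrest]
  simp

lemma swapDiff_eq_sub_swapDiff {f : Perm V → R} {p j k : V} (hpj : p ≠ j) (hpk : p ≠ k)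
    (hjk : j ≠ k) (hf : swap j k ∈ rightStabilizer f) (w : Perm V) :
    swapDiff f p j w =
      swapDiff f p j (w * swap p k) - swapDiff f p j (w * swap p k * swap j k) := by
  have h₁ : swap p k * swap p j = swap p j * swap j k := by
    rw [mul_swap_eq_swap_mul (swap p j)]
    simp [swap_apply_of_ne_of_ne hpk.symm hjk.symm]
  have h₂ : swap p k * swap j k * swap p j = swap j k := by
    rw [mul_assoc, mul_swap_eq_swap_mul (swap j k), swap_apply_left,
      swap_apply_of_ne_of_ne hpj hpk, swap_mul_self_mul]
  have e₁ : f (w * swap p k * swap p j) = f (w * swap p j) := by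
    rw [mul_assoc, h₁, ← mul_assoc, hf]
  have e₂ : f (w * swap p k * swap j k * swap p j) = f w := by
    rw [mul_assoc w, mul_assoc w, h₂, hf]
  rw [swapDiff, swapDiff, swapDiff, e₁, e₂, hf]
  abel

open Classical in
/-- If the difference along `(p, j)` depends only on the labels of `p` and `j`, it is an
antisymmetric cocycle in these two labels, hence a coboundary; a third vertex `k` interchangeable
with `j` is what makes the cocycle identity available. -/
lemma exists_swapDiff_eq_sub [Finite V] {f : Perm V → R} {p j k : V} (hpj : p ≠ j) (hpk : p ≠ k)
    (hjk : j ≠ k) (hf : swap j k ∈ rightStabilizer f)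
    (h : ∀ u v, u ≠ p → u ≠ j → v ≠ p → v ≠ j → swap u v ∈ rightStabilizer (swapDiff f p j)) :
    ∃ d : V → R, swapDiff f p j = fun w => d (w j) - d (w p) := by
  let d : V → R := fun b => if hb : ∃ w : Perm V, w p = p ∧ w j = b
    then swapDiff f p j hb.choose else 0
  have hd : ∀ w : Perm V, w p = p → d (w j) = swapDiff f p j w := fun w hw => by
    have hb : ∃ w' : Perm V, w' p = p ∧ w' j = w j := ⟨w, hw, rfl⟩
    simp only [d, dif_pos hb]
    exact swapDiff_eq_of_apply_eq h (hb.choose_spec.1.trans hw.symm) hb.choose_spec.2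
  have hdp : d p = 0 := dif_neg fun ⟨w, hp, hj⟩ => hpj (w.injective (hp.trans hj.symm))
  refine ⟨d, funext fun w => ?_⟩
  by_cases hwp : w p = p
  · rw [hwp, hdp, sub_zero, hd w hwp]
  by_cases hwj : w j = p
  · have := hd (w * swap p j) (by simpa using hwj)
    rw [swapDiff_mul_swap, Perm.mul_apply, swap_apply_right] at this
    rw [hwj, hdp, this, zero_sub, neg_neg]
  obtain ⟨w', hp', hj', hk'⟩ : ∃ w' : Perm V, w' p = w p ∧ w' j = w j ∧ w' k = p := by
    have hxp : p ≠ w⁻¹ p := fun e => hwp (Perm.eq_inv_iff_eq.1 e)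
    have hxj : j ≠ w⁻¹ p := fun e => hwj (Perm.eq_inv_iff_eq.1 e)
    refine ⟨w * swap (w⁻¹ p) k, ?_, ?_, by simp⟩
    · rw [Perm.mul_apply, swap_apply_of_ne_of_ne hxp hpk]
    · rw [Perm.mul_apply, swap_apply_of_ne_of_ne hxj hjk]
  rw [← swapDiff_eq_of_apply_eq h hp' hj', swapDiff_eq_sub_swapDiff hpj hpk hjk hf, ← hp', ← hj']
  rw [← hd _ (by simpa using hk'), ← hd _ (by simpa [swap_apply_of_ne_of_ne hpj hpk] using hk')]
  simp [swap_apply_of_ne_of_ne hpj.symm hjk]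

end SwapDiff

section SplineCoeffs

variable {V : Type*} [Fintype V] [DecidableEq V] (Γ : SimpleGraph V) (R : Type*) [AddCommGroup R]

/-- The coefficient systems of linear splines on `Γ`: `φ w v` stands for the coefficient of
`t_{w(v)}` in the value at `w`. -/
def splineCoeffs : AddSubgroup (Perm V → V → R) where
  carrier := {φ | ∀ ⦃i j⦄, Γ.Adj i j →
    (∀ v, v ≠ i → v ≠ j → swap i j ∈ rightStabilizer (φ · v)) ∧
      swap i j ∈ rightStabilizer fun w => ∑ v, φ w v}
  add_mem' hφ hψ i j hij :=
    ⟨fun v hi hj w => congrArg₂ (· + ·) ((hφ hij).1 v hi hj w) ((hψ hij).1 v hi hj w), fun w => by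
      simpa only [Pi.add_apply, Finset.sum_add_distrib] using
        congrArg₂ (· + ·) ((hφ hij).2 w) ((hψ hij).2 w)⟩
  zero_mem' _ _ _ := ⟨fun _ _ _ _ => rfl, fun _ => rfl⟩
  neg_mem' hφ i j hij :=
    ⟨fun v hi hj w => congrArg Neg.neg ((hφ hij).1 v hi hj w), fun w => by
      simpa only [Pi.neg_apply, Finset.sum_neg_distrib] using congrArg Neg.neg ((hφ hij).2 w)⟩

variable {Γ R} {φ : Perm V → V → R} {G : Finset V} {i j : V}

lemma swap_mem_rightStabilizer_sum (hφ : φ ∈ splineCoeffs Γ R) (hij : Γ.Adj i j)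
    (hG : i ∈ G ↔ j ∈ G) : swap i j ∈ rightStabilizer fun w => ∑ v ∈ G, φ w v := by
  have hout : ∀ S : Finset V, i ∉ S → j ∉ S →
      swap i j ∈ rightStabilizer fun w => ∑ v ∈ S, φ w v := fun S hi hj w =>
    Finset.sum_congr rfl fun v hv =>
      (hφ hij).1 v (ne_of_mem_of_not_mem hv hi) (ne_of_mem_of_not_mem hv hj) w
  by_cases hi : i ∈ G
  · have hG' : (fun w => ∑ v ∈ G, φ w v) = (fun w => ∑ v, φ w v) - fun w => ∑ v ∈ Gᶜ, φ w v :=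
      funext fun w => eq_sub_of_add_eq (Finset.sum_add_sum_compl G _)
    rw [hG']
    exact mem_rightStabilizer_sub (hφ hij).2 (hout _ (by simpa) (by simpa [← hG]))
  · exact hout G hi (hG.not.1 hi)

lemma swapDiff_sum (hφ : φ ∈ splineCoeffs Γ R) (hij : Γ.Adj i j) (hi : i ∉ G) (hj : j ∈ G) :
    swapDiff (fun w => ∑ v ∈ G, φ w v) i j = swapDiff (φ · j) i j := by
  funext w
  have hrest : ∑ v ∈ G.erase j, φ (w * swap i j) v = ∑ v ∈ G.erase j, φ w v :=
    swap_mem_rightStabilizer_sum hφ hij (by simp [hi]) w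
  rw [swapDiff, ← Finset.add_sum_erase _ _ hj, ← Finset.add_sum_erase _ _ hj, hrest,
    add_sub_add_right_eq_sub, swapDiff]

lemma swap_mem_rightStabilizer_apply_add (hφ : φ ∈ splineCoeffs Γ R) (hij : Γ.Adj i j) :
    swap i j ∈ rightStabilizer fun w => φ w i + φ w j := by
  simpa only [Finset.sum_pair hij.ne] using
    swap_mem_rightStabilizer_sum (G := {i, j}) hφ hij (by simp)

lemma swap_mem_rightStabilizer_apply_left (hφ : φ ∈ splineCoeffs Γ R) (hij : Γ.Adj i j)
    (hj : swap i j ∈ rightStabilizer (φ · j)) : swap i j ∈ rightStabilizer (φ · i) := by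
  have h := mem_rightStabilizer_sub (swap_mem_rightStabilizer_apply_add hφ hij) hj
  rwa [show ((fun w => φ w i + φ w j) - fun w => φ w j) = (φ · i) from
    funext fun w => add_sub_cancel_right _ _] at h

end SplineCoeffs

section EdgeSide

variable {V : Type*} [Fintype V] (Γ : SimpleGraph V) {i j u v : V}

open Classical in
/-- The vertex set of the component of `i` after deleting the edge `{i, j}`; this is `V(G_s)` for
a cut edge `s = {i, j}`. -/
noncomputable def edgeSide (i j : V) : Finset V :=
  {v | (Γ.deleteEdges {s(i, j)}).Reachable i v}

variable {Γ}

lemma mem_edgeSide : v ∈ edgeSide Γ i j ↔ (Γ.deleteEdges {s(i, j)}).Reachable i v := by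
  simp [edgeSide]

lemma left_mem_edgeSide : i ∈ edgeSide Γ i j :=
  mem_edgeSide.2 .rfl

lemma right_notMem_edgeSide (h : Γ.IsBridge s(i, j)) : j ∉ edgeSide Γ i j :=
  mem_edgeSide.not.2 (SimpleGraph.isBridge_iff.1 h)

lemma mem_edgeSide_iff_of_adj (huv : Γ.Adj u v) (hne : s(u, v) ≠ s(i, j)) :
    u ∈ edgeSide Γ i j ↔ v ∈ edgeSide Γ i j := by
  have h : (Γ.deleteEdges {s(i, j)}).Adj u v := SimpleGraph.deleteEdges_adj.2 ⟨huv, hne⟩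
  rw [mem_edgeSide, mem_edgeSide]
  exact ⟨fun hu => hu.trans h.reachable, fun hv => hv.trans h.symm.reachable⟩

lemma eq_and_eq_of_adj_edgeSide (h : Γ.IsBridge s(i, j)) (huv : Γ.Adj u v)
    (hu : u ∈ edgeSide Γ i j) (hv : v ∉ edgeSide Γ i j) : u = i ∧ v = j := by
  by_contra hne
  have hne' : s(u, v) ≠ s(i, j) := by
    rw [Ne, Sym2.eq_iff, not_or]
    exact ⟨hne, fun e => right_notMem_edgeSide h (e.1 ▸ hu)⟩
  exact hv ((mem_edgeSide_iff_of_adj huv hne').1 hu)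

end EdgeSide

section CutEdges

variable {V R : Type*} [Fintype V] [DecidableEq V] [AddCommGroup R] {Γ : SimpleGraph V}
  {φ : Perm V → V → R} {i j : V}

lemma swap_mem_rightStabilizer_sum_edgeSide_left (hφ : φ ∈ splineCoeffs Γ R)
    (hΓ : Γ.Preconnected) (h : Γ.IsBridge s(i, j)) {u : V} (hu : u ∈ edgeSide Γ i j) :
    swap u i ∈ rightStabilizer fun w => ∑ v ∈ edgeSide Γ i j, φ w v :=
  swap_mem_of_boundary (S := edgeSide Γ i j) hΓ
    (fun _ _ ha hb hab => (eq_and_eq_of_adj_edgeSide h hab ha hb).1)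
    (fun _ _ ha hb hab => swap_mem_rightStabilizer_sum hφ hab (iff_of_true ha hb)) hu

lemma swap_mem_rightStabilizer_sum_edgeSide_right (hφ : φ ∈ splineCoeffs Γ R)
    (hΓ : Γ.Preconnected) (h : Γ.IsBridge s(i, j)) {u : V} (hu : u ∉ edgeSide Γ i j) :
    swap u j ∈ rightStabilizer fun w => ∑ v ∈ edgeSide Γ i j, φ w v :=
  swap_mem_of_boundary (S := (edgeSide Γ i j : Set V)ᶜ) hΓ
    (fun _ _ ha hb hab => (eq_and_eq_of_adj_edgeSide h hab.symm (not_not.1 hb) ha).2)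
    (fun _ _ ha hb hab => swap_mem_rightStabilizer_sum hφ hab (iff_of_false ha hb)) hu

lemma sum_edgeSide_eq_of_image_eq (hφ : φ ∈ splineCoeffs Γ R) (hΓ : Γ.Preconnected)
    (h : Γ.IsBridge s(i, j)) {w w' : Perm V}
    (hw : w '' edgeSide Γ i j = w' '' edgeSide Γ i j) :
    ∑ v ∈ edgeSide Γ i j, φ w v = ∑ v ∈ edgeSide Γ i j, φ w' v := by
  refine eq_of_forall_swap_mem (f := fun w => ∑ v ∈ edgeSide Γ i j, φ w v) fun x => ?_
  have hx : (w'⁻¹ * w) x ∈ edgeSide Γ i j ↔ x ∈ edgeSide Γ i j := by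
    rw [← Finset.mem_coe, ← w'.injective.mem_set_image, ← hw, Perm.mul_apply, Perm.inv_def,
      apply_symm_apply, w.injective.mem_set_image, Finset.mem_coe]
  by_cases hxG : x ∈ edgeSide Γ i j
  · have hin := swap_mem_rightStabilizer_sum_edgeSide_left hφ hΓ h (hx.2 hxG)
    exact SubmonoidClass.swap_mem_trans _
      (swap_mem_rightStabilizer_sum_edgeSide_left hφ hΓ h hxG) (swap_comm _ i ▸ hin)
  · have hout := swap_mem_rightStabilizer_sum_edgeSide_right hφ hΓ h (hx.not.2 hxG)
    exact SubmonoidClass.swap_mem_trans _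
      (swap_mem_rightStabilizer_sum_edgeSide_right hφ hΓ h hxG) (swap_comm _ j ▸ hout)

variable (Γ φ) in
/-- The coefficient system at the cut edge `{i, j}` which has the same differences along this edge
as `φ`. -/
noncomputable def cutEdgeCoeff (i j : V) (w : Perm V) : V → R :=
  Pi.single i (∑ v ∈ edgeSide Γ i j, φ w v) - Pi.single j (∑ v ∈ edgeSide Γ i j, φ w v)

lemma swap_mem_rightStabilizer_cutEdgeCoeff (hφ : φ ∈ splineCoeffs Γ R) {a b : V}
    (hab : Γ.Adj a b) (hne : s(a, b) ≠ s(i, j)) :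
    swap a b ∈ rightStabilizer (cutEdgeCoeff Γ φ i j) := fun w => by
  have hsum : ∑ v ∈ edgeSide Γ i j, φ (w * swap a b) v = ∑ v ∈ edgeSide Γ i j, φ w v :=
    swap_mem_rightStabilizer_sum hφ hab (mem_edgeSide_iff_of_adj hab hne) w
  rw [cutEdgeCoeff, hsum, cutEdgeCoeff]

lemma cutEdgeCoeff_mem_splineCoeffs (hφ : φ ∈ splineCoeffs Γ R) (i j : V) :
    cutEdgeCoeff Γ φ i j ∈ splineCoeffs Γ R := by
  refine fun a b hab => ⟨fun v hva hvb w => ?_, fun w => by simp [cutEdgeCoeff]⟩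
  by_cases hne : s(a, b) = s(i, j)
  · have hv : v ∉ s(i, j) := by simp [← hne, hva, hvb]
    rw [Sym2.mem_iff, not_or] at hv
    simp [cutEdgeCoeff, hv]
  · exact congrFun (swap_mem_rightStabilizer_cutEdgeCoeff hφ hab hne w) v

variable (Γ φ) in
/-- The coefficient at an endpoint of a cut edge does not change along this edge. -/
def IsBridgeFlat : Prop :=
  ∀ ⦃i j⦄, Γ.Adj i j → Γ.IsBridge s(i, j) → swap i j ∈ rightStabilizer (φ · i)

lemma swap_mem_rightStabilizer_sub_cutEdgeCoeff (hφ : φ ∈ splineCoeffs Γ R) (hij : Γ.Adj i j)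
    (h : Γ.IsBridge s(i, j)) :
    swap i j ∈ rightStabilizer fun w => φ w i - cutEdgeCoeff Γ φ i j w i := by
  have hG : (fun w => φ w i - cutEdgeCoeff Γ φ i j w i) =
      (φ · i) - fun w => ∑ v ∈ edgeSide Γ i j, φ w v := by
    funext w
    simp [cutEdgeCoeff, hij.ne]
  rw [swap_mem_rightStabilizer_iff, hG, swapDiff_sub, swapDiff_comm _ i j, swapDiff_comm _ i j,
    swapDiff_sum hφ hij.symm (right_notMem_edgeSide h) left_mem_edgeSide, sub_self]

end CutEdges

section CutEdgePart

variable {V R : Type*} [Fintype V] [LinearOrder V] [AddCommGroup R] {Γ : SimpleGraph V}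
  {φ : Perm V → V → R}

open Classical in
variable (Γ) in
/-- The cut edges of `Γ`, each as the pair of its endpoints in increasing order. -/
noncomputable def cutEdges : Finset (V × V) :=
  {e | e.1 < e.2 ∧ Γ.Adj e.1 e.2 ∧ Γ.IsBridge s(e.1, e.2)}

lemma mem_cutEdges {e : V × V} :
    e ∈ cutEdges Γ ↔ e.1 < e.2 ∧ Γ.Adj e.1 e.2 ∧ Γ.IsBridge s(e.1, e.2) := by
  simp [cutEdges]

lemma sub_sum_cutEdgeCoeff_mem_splineCoeffs (hφ : φ ∈ splineCoeffs Γ R) :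
    φ - ∑ e ∈ cutEdges Γ, cutEdgeCoeff Γ φ e.1 e.2 ∈ splineCoeffs Γ R :=
  sub_mem hφ (sum_mem fun e _ => cutEdgeCoeff_mem_splineCoeffs hφ e.1 e.2)

lemma isBridgeFlat_sub_sum_cutEdgeCoeff (hφ : φ ∈ splineCoeffs Γ R) :
    IsBridgeFlat Γ (φ - ∑ e ∈ cutEdges Γ, cutEdgeCoeff Γ φ e.1 e.2) := by
  have hlt : ∀ i j, i < j → Γ.Adj i j → Γ.IsBridge s(i, j) → swap i j ∈
      rightStabilizer ((φ - ∑ e ∈ cutEdges Γ, cutEdgeCoeff Γ φ e.1 e.2) · i) := by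
    intro i j hlt hij hbridge w
    have hmem : (i, j) ∈ cutEdges Γ := mem_cutEdges.2 ⟨hlt, hij, hbridge⟩
    have hrest : ∀ e ∈ (cutEdges Γ).erase (i, j),
        cutEdgeCoeff Γ φ e.1 e.2 (w * swap i j) i = cutEdgeCoeff Γ φ e.1 e.2 w i := by
      rintro ⟨a, b⟩ he
      rw [Finset.mem_erase, mem_cutEdges] at he
      refine congrFun (swap_mem_rightStabilizer_cutEdgeCoeff hφ hij ?_ w) i
      rw [Ne, Sym2.eq_iff]
      rintro (⟨rfl, rfl⟩ | ⟨rfl, rfl⟩)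
      exacts [he.1 rfl, hlt.asymm he.2.1]
    have hmain : φ (w * swap i j) i - cutEdgeCoeff Γ φ i j (w * swap i j) i =
        φ w i - cutEdgeCoeff Γ φ i j w i :=
      swap_mem_rightStabilizer_sub_cutEdgeCoeff hφ hij hbridge w
    simp only [Pi.sub_apply, Finset.sum_apply]
    rw [← Finset.add_sum_erase _ _ hmem, ← Finset.add_sum_erase _ _ hmem, ← sub_sub, ← sub_sub,
      Finset.sum_congr rfl hrest, hmain]
  intro i j hij hbridge
  rcases hij.ne.lt_or_gt with h | h
  · exact hlt i j h hij hbridge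
  · have := hlt j i h hij.symm (Sym2.eq_swap ▸ hbridge)
    exact swap_mem_rightStabilizer_apply_left (sub_sum_cutEdgeCoeff_mem_splineCoeffs hφ) hij
      (swap_comm i j ▸ this)

end CutEdgePart

section Branches

lemma connectedComponentMk_eq_of_adj {V : Type*} {Γ : SimpleGraph V} {p u v : V}
    (huv : Γ.Adj u v) (hu : u ≠ p) (hv : v ≠ p) :
    (Γ.deleteIncidenceSet p).connectedComponentMk u =
      (Γ.deleteIncidenceSet p).connectedComponentMk v :=
  SimpleGraph.ConnectedComponent.sound
    (SimpleGraph.deleteIncidenceSet_adj.2 ⟨huv, hu, hv⟩).reachable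

variable {V : Type*} [Fintype V] [DecidableEq V] (Γ : SimpleGraph V)

open Classical in
/-- The vertices of a component `c` of `Γ − p`. Deleting only the edges at `p` leaves `p` as a
component of its own; the branch of that component is empty. -/
noncomputable def branch (p : V) (c : (Γ.deleteIncidenceSet p).ConnectedComponent) : Finset V :=
  ({p}ᶜ : Finset V).filter fun v => (Γ.deleteIncidenceSet p).connectedComponentMk v = c

variable {Γ} {p u v : V} {c : (Γ.deleteIncidenceSet p).ConnectedComponent}

lemma mem_branch :
    v ∈ branch Γ p c ↔ v ≠ p ∧ (Γ.deleteIncidenceSet p).connectedComponentMk v = c := by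
  simp [branch]

lemma notMem_branch_self : p ∉ branch Γ p c :=
  fun h => (mem_branch.1 h).1 rfl

lemma mem_branch_iff_of_adj (huv : Γ.Adj u v) (hu : u ≠ p) (hv : v ≠ p) :
    u ∈ branch Γ p c ↔ v ∈ branch Γ p c := by
  rw [mem_branch, mem_branch, connectedComponentMk_eq_of_adj huv hu hv,
    and_congr_left fun _ => iff_of_true hu hv]

lemma eq_of_adj_branch (huv : Γ.Adj u v) (hu : u ∉ branch Γ p c) (hv : v ∈ branch Γ p c) :
    u = p := by
  by_contra hup
  exact hu ((mem_branch_iff_of_adj huv hup (mem_branch.1 hv).1).2 hv)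

lemma coe_branch_eq (hv : v ∈ branch Γ p c) :
    (branch Γ p c : Set V) = {y | (Γ.deleteIncidenceSet p).Reachable v y} := by
  ext y
  obtain ⟨hvp, rfl⟩ := mem_branch.1 hv
  rw [Finset.mem_coe, mem_branch, SimpleGraph.ConnectedComponent.eq]
  refine ⟨fun h => h.2.symm, fun h => ⟨?_, h.symm⟩⟩
  rintro rfl
  obtain ⟨q⟩ := h.symm
  cases q with
  | nil => exact hvp rfl
  | cons hadj _ => exact (SimpleGraph.deleteIncidenceSet_adj.1 hadj).2.1 rfl

lemma coe_branch_eq_compl_singleton (h : (Γ.induce ({p}ᶜ : Set V)).Preconnected)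
    (hv : v ∈ branch Γ p c) : (branch Γ p c : Set V) = {p}ᶜ := by
  obtain ⟨hvp, rfl⟩ := mem_branch.1 hv
  ext y
  rw [Finset.mem_coe, mem_branch]
  refine ⟨And.left, fun hy => ⟨hy, SimpleGraph.ConnectedComponent.sound ?_⟩⟩
  let incl : Γ.induce ({p}ᶜ : Set V) →g Γ.deleteIncidenceSet p :=
    ⟨Subtype.val, fun {a b} hab => SimpleGraph.deleteIncidenceSet_adj.2 ⟨hab, a.2, b.2⟩⟩
  exact (h ⟨y, hy⟩ ⟨v, hvp⟩).map incl

lemma exists_adj_branch (hΓ : Γ.Preconnected) (hu : u ∈ branch Γ p c) :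
    ∃ v ∈ branch Γ p c, Γ.Adj p v := by
  obtain ⟨q⟩ := hΓ u p
  obtain ⟨d, -, hfst, hsnd⟩ := q.exists_boundary_dart (branch Γ p c) hu notMem_branch_self
  exact ⟨d.fst, hfst, eq_of_adj_branch d.adj.symm hsnd hfst ▸ d.adj.symm⟩

lemma isBridge_of_unique_adj_branch (hv : v ∈ branch Γ p c)
    (huniq : ∀ u ∈ branch Γ p c, Γ.Adj p u → u = v) : Γ.IsBridge s(p, v) := by
  rw [SimpleGraph.isBridge_iff]
  rintro ⟨q⟩
  obtain ⟨d, -, hfst, hsnd⟩ :=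
    q.exists_boundary_dart (branch Γ p c : Set V)ᶜ notMem_branch_self (not_not.2 hv)
  obtain ⟨hadj, hne⟩ := SimpleGraph.deleteEdges_adj.1 d.adj
  have hp : d.fst = p := eq_of_adj_branch hadj hfst (not_not.1 hsnd)
  rw [hp] at hadj hne
  exact hne (by rw [huniq d.snd (not_not.1 hsnd) hadj]; rfl)

lemma sum_branch [Fintype (Γ.deleteIncidenceSet p).ConnectedComponent] {M : Type*}
    [AddCommMonoid M] (f : V → M) : ∑ c, ∑ v ∈ branch Γ p c, f v = ∑ v ∈ {p}ᶜ, f v := by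
  classical exact Finset.sum_fiberwise _ _ f

end Branches

section BranchSums

variable {V R : Type*} [Fintype V] [DecidableEq V] [AddCommGroup R] {Γ : SimpleGraph V}
  {φ : Perm V → V → R} {p j k u v : V} {c : (Γ.deleteIncidenceSet p).ConnectedComponent}

lemma swap_mem_rightStabilizer_sum_branch (hφ : φ ∈ splineCoeffs Γ R) (hu : u ∈ branch Γ p c)
    (hv : v ∈ branch Γ p c) : swap u v ∈ rightStabilizer fun w => ∑ x ∈ branch Γ p c, φ w x := by
  refine swap_mem_of_reachable (Γ := Γ.deleteIncidenceSet p) (fun a b hab => ?_)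
    (SimpleGraph.ConnectedComponent.exact ((mem_branch.1 hu).2.trans (mem_branch.1 hv).2.symm))
  obtain ⟨hab, ha, hb⟩ := SimpleGraph.deleteIncidenceSet_adj.1 hab
  exact swap_mem_rightStabilizer_sum hφ hab (mem_branch_iff_of_adj hab ha hb)

lemma swap_mem_of_notMem_branch {H : Subgroup (Perm V)} (hΓ : Γ.Preconnected)
    (hH : ∀ a b, a ∉ branch Γ p c → b ∉ branch Γ p c → Γ.Adj a b → swap a b ∈ H)
    (hu : u ∉ branch Γ p c) : swap u p ∈ H :=
  swap_mem_of_boundary (S := (branch Γ p c : Set V)ᶜ) hΓ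
    (fun _ _ ha hb hab => eq_of_adj_branch hab ha (not_not.1 hb)) hH hu

lemma exists_sum_branch_eq_of_swapDiff (hφ : φ ∈ splineCoeffs Γ R) (hΓ : Γ.Preconnected)
    (hj : j ∈ branch Γ p c) {d : V → R}
    (hd : swapDiff (fun w => ∑ v ∈ branch Γ p c, φ w v) p j = fun w => d (w j) - d (w p)) :
    ∃ C, ∀ w, ∑ v ∈ branch Γ p c, φ w v = C + ∑ v ∈ branch Γ p c, d (w v) := by
  set f : Perm V → R :=
    (fun w => ∑ v ∈ branch Γ p c, φ w v) - fun w => ∑ v ∈ branch Γ p c, d (w v) with hf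
  have hpj : swap p j ∈ rightStabilizer f := by
    rw [swap_mem_rightStabilizer_iff, hf, swapDiff_sub, hd,
      swapDiff_sum_apply d notMem_branch_self hj, sub_self]
  have hin : ∀ u ∈ branch Γ p c, swap u j ∈ rightStabilizer f := fun u hu =>
    mem_rightStabilizer_sub (swap_mem_rightStabilizer_sum_branch hφ hu hj)
      (swap_mem_rightStabilizer_sum_apply d (iff_of_true hu hj))
  have hout : ∀ u ∉ branch Γ p c, swap u p ∈ rightStabilizer f := fun u hu =>
    swap_mem_of_notMem_branch hΓ (fun a b ha hb hab =>
      mem_rightStabilizer_sub (swap_mem_rightStabilizer_sum hφ hab (iff_of_false ha hb))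
        (swap_mem_rightStabilizer_sum_apply d (iff_of_false ha hb))) hu
  obtain ⟨C, hC⟩ := exists_eq_const_of_forall_swap_mem (f := f) (j := j) fun u =>
    if hu : u ∈ branch Γ p c then hin u hu
    else SubmonoidClass.swap_mem_trans _ (hout u hu) hpj
  exact ⟨C, fun w => sub_eq_iff_eq_add.1 (hC w)⟩

lemma exists_swapDiff_sum_branch_eq (hφ : φ ∈ splineCoeffs Γ R) (hΓ : Γ.Preconnected)
    (hj : j ∈ branch Γ p c) (hk : k ∈ branch Γ p c) (hpj : Γ.Adj p j) (hpk : Γ.Adj p k)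
    (hjk : j ≠ k) :
    ∃ d : V → R,
      swapDiff (fun w => ∑ v ∈ branch Γ p c, φ w v) p j = fun w => d (w j) - d (w p) := by
  have hD : ∀ u, u ≠ p → u ≠ j →
      swap u k ∈ rightStabilizer (swapDiff (fun w => ∑ v ∈ branch Γ p c, φ w v) p j) := by
    intro u hup huj
    have hp : swap u k p = p := swap_apply_of_ne_of_ne hup.symm hpk.ne
    have hj' : swap u k j = j := swap_apply_of_ne_of_ne huj.symm hjk
    by_cases hu : u ∈ branch Γ p c
    · exact mem_rightStabilizer_swapDiff (swap_mem_rightStabilizer_sum_branch hφ hu hk) hp hj'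
    · rw [swapDiff_sum hφ hpj notMem_branch_self hj]
      have hup' : swap u p ∈ rightStabilizer (φ · j) := swap_mem_of_notMem_branch hΓ
        (fun a b ha hb hab =>
          (hφ hab).1 j (ne_of_mem_of_not_mem hj ha) (ne_of_mem_of_not_mem hj hb)) hu
      exact mem_rightStabilizer_swapDiff
        (SubmonoidClass.swap_mem_trans _ hup' ((hφ hpk).1 j hpj.ne' hjk)) hp hj'
  exact exists_swapDiff_eq_sub hpj.ne hpk.ne hjk (swap_mem_rightStabilizer_sum_branch hφ hj hk)
    fun u v hup huj hvp hvj =>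
      SubmonoidClass.swap_mem_trans _ (hD u hup huj) (swap_comm v k ▸ hD v hvp hvj)

lemma exists_sum_branch_eq (hφ : φ ∈ splineCoeffs Γ R) (hΓ : Γ.Preconnected)
    (hflat : IsBridgeFlat Γ φ) (c : (Γ.deleteIncidenceSet p).ConnectedComponent) :
    ∃ (d : V → R) (C : R), ∀ w, ∑ v ∈ branch Γ p c, φ w v = C + ∑ v ∈ branch Γ p c, d (w v) := by
  rcases (branch Γ p c).eq_empty_or_nonempty with hempty | ⟨u, hu⟩
  · exact ⟨0, 0, fun w => by simp [hempty]⟩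
  obtain ⟨j, hj, hpj⟩ := exists_adj_branch hΓ hu
  by_cases huniq : ∀ k ∈ branch Γ p c, Γ.Adj p k → k = j
  · have hbridge : Γ.IsBridge s(j, p) :=
      Sym2.eq_swap ▸ isBridge_of_unique_adj_branch hj huniq
    have hswap : swap p j ∈ rightStabilizer (φ · j) := swap_comm j p ▸ hflat hpj.symm hbridge
    refine ⟨0, exists_sum_branch_eq_of_swapDiff hφ hΓ hj ?_⟩
    rw [swapDiff_sum hφ hpj notMem_branch_self hj, swap_mem_rightStabilizer_iff.1 hswap]
    simp only [Pi.zero_apply, sub_self]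
    rfl
  · push Not at huniq
    obtain ⟨k, hk, hpk, hkj⟩ := huniq
    obtain ⟨d, hd⟩ := exists_swapDiff_sum_branch_eq hφ hΓ hj hk hpj hpk hkj.symm
    exact ⟨d, exists_sum_branch_eq_of_swapDiff hφ hΓ hj hd⟩

lemma exists_sum_eq_const (hφ : φ ∈ splineCoeffs Γ R) (hΓ : Γ.Connected) :
    ∃ C, ∀ w, ∑ v, φ w v = C := by
  obtain ⟨j⟩ := hΓ.nonempty
  exact exists_eq_const_of_forall_swap_mem fun u =>
    swap_mem_of_reachable (fun a b hab => (hφ hab).2) (hΓ.preconnected u j)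

lemma exists_apply_eq_sub_sum (hφ : φ ∈ splineCoeffs Γ R) (hΓ : Γ.Connected)
    (hflat : IsBridgeFlat Γ φ) (p : V) :
    ∃ (d : (Γ.deleteIncidenceSet p).ConnectedComponent → V → R) (C : R), ∀ w,
      φ w p = C - ∑ u ∈ {p}ᶜ, d ((Γ.deleteIncidenceSet p).connectedComponentMk u) (w u) := by
  have := Fintype.ofFinite (Γ.deleteIncidenceSet p).ConnectedComponent
  choose d B hB using exists_sum_branch_eq (p := p) hφ hΓ.preconnected hflat
  obtain ⟨T, hT⟩ := exists_sum_eq_const hφ hΓ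
  refine ⟨d, T - ∑ c, B c, fun w => ?_⟩
  have hbranches : ∑ u ∈ {p}ᶜ, φ w u =
      ∑ c, B c + ∑ u ∈ {p}ᶜ, d ((Γ.deleteIncidenceSet p).connectedComponentMk u) (w u) := by
    rw [← sum_branch (Γ := Γ), ← sum_branch (Γ := Γ), ← Finset.sum_add_distrib]
    refine Finset.sum_congr rfl fun c _ => (hB c w).trans (congrArg (B c + ·) ?_)
    exact Finset.sum_congr rfl fun v hv => by rw [(mem_branch.1 hv).2]
  rw [sub_sub, ← hbranches, ← hT w, Fintype.sum_eq_add_sum_compl p, add_sub_cancel_right]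

end BranchSums

section CutVertices

variable {V R : Type*} [Fintype V] [DecidableEq V] [AddCommGroup R] (Γ : SimpleGraph V)

/-- The coefficient system at a vertex `p` which is given by a function of the label on each
component of `Γ − p` and makes up for it at `p`. -/
def cutVertexCoeff (p : V) (d : (Γ.deleteIncidenceSet p).ConnectedComponent → V → R)
    (w : Perm V) (v : V) : R :=
  if v = p then -∑ u ∈ {p}ᶜ, d ((Γ.deleteIncidenceSet p).connectedComponentMk u) (w u)
  else d ((Γ.deleteIncidenceSet p).connectedComponentMk v) (w v)

variable {Γ} {φ : Perm V → V → R}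

lemma sum_cutVertexCoeff (p : V) (d : (Γ.deleteIncidenceSet p).ConnectedComponent → V → R)
    (w : Perm V) : ∑ v, cutVertexCoeff Γ p d w v = 0 := by
  rw [Fintype.sum_eq_add_sum_compl p, cutVertexCoeff, if_pos rfl, neg_add_eq_zero]
  exact Finset.sum_congr rfl fun v hv => (if_neg (by simpa using hv)).symm

lemma cutVertexCoeff_mem_splineCoeffs (p : V)
    (d : (Γ.deleteIncidenceSet p).ConnectedComponent → V → R) :
    cutVertexCoeff Γ p d ∈ splineCoeffs Γ R := by
  refine fun i j hij => ⟨fun v hvi hvj w => ?_, fun w => by simp only [sum_cutVertexCoeff]⟩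
  by_cases hvp : v = p
  · have hmk := connectedComponentMk_eq_of_adj hij (hvp ▸ hvi.symm) (hvp ▸ hvj.symm)
    simp only [cutVertexCoeff, if_pos hvp]
    refine congrArg Neg.neg (Finset.sum_equiv (swap i j) (fun x => ?_) fun x _ => ?_)
    · exact (swap_apply_mem_iff (by simp [← hvp, hvi.symm, hvj.symm]) x).symm
    · rw [Perm.mul_apply, swap_apply_def]
      split_ifs with hxi hxj
      · rw [hxi, hmk]
      · rw [hxj, hmk]
      · rfl
  · simp [cutVertexCoeff, hvp, swap_apply_of_ne_of_ne hvi hvj]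

lemma exists_sub_sum_cutVertexCoeff_apply (hφ : φ ∈ splineCoeffs Γ R) (hΓ : Γ.Connected)
    (hflat : IsBridgeFlat Γ φ) :
    ∃ (d : ∀ p, (Γ.deleteIncidenceSet p).ConnectedComponent → V → R) (E : V → V → R),
      ∀ w v, (φ - ∑ p, cutVertexCoeff Γ p (d p)) w v = E v (w v) := by
  choose d C hC using exists_apply_eq_sub_sum hφ hΓ hflat
  refine ⟨d, fun v a => C v -
    ∑ p ∈ {v}ᶜ, d p ((Γ.deleteIncidenceSet p).connectedComponentMk v) a, fun w v => ?_⟩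
  have hne : ∀ p ∈ ({v}ᶜ : Finset V), cutVertexCoeff Γ p (d p) w v =
      d p ((Γ.deleteIncidenceSet p).connectedComponentMk v) (w v) := fun p hp =>
    if_neg fun h => by simp [h] at hp
  simp only [Pi.sub_apply, Finset.sum_apply]
  rw [Fintype.sum_eq_add_sum_compl v, Finset.sum_congr rfl hne, hC v w, cutVertexCoeff,
    if_pos rfl]
  abel

lemma sub_eq_sub_of_apply_eq (hφ : φ ∈ splineCoeffs Γ R) (hΓ : Γ.Preconnected) {E : V → V → R}
    (hE : ∀ w v, φ w v = E v (w v)) (i j a b : V) : E i a - E j a = E i b - E j b := by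
  obtain ⟨q⟩ := hΓ i j
  induction q with
  | nil => rw [sub_self, sub_self]
  | @cons i k j hik _ ih =>
    have hadj : E i a - E k a = E i b - E k b := by
      rcases eq_or_ne a b with rfl | hab
      · rfl
      obtain ⟨w, rfl, rfl⟩ : ∃ w : Perm V, w i = a ∧ w k = b :=
        MulAction.is_two_pretransitive_iff.1 (Perm.isMultiplyPretransitive V 2) hik.ne hab
      have h := swap_mem_rightStabilizer_apply_add hφ hik w
      simp only [hE, Perm.mul_apply, swap_apply_left, swap_apply_right] at h
      rw [sub_eq_sub_iff_add_eq_add, ← h, add_comm]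
    rw [← sub_add_sub_cancel (E i a) (E k a), hadj, ih, sub_add_sub_cancel]

lemma exists_apply_eq_add (hφ : φ ∈ splineCoeffs Γ R) (hΓ : Γ.Connected) {E : V → V → R}
    (hE : ∀ w v, φ w v = E v (w v)) : ∃ d c : V → R, ∀ w v, φ w v = d (w v) + c v := by
  obtain ⟨o⟩ := hΓ.nonempty
  refine ⟨E o, fun v => E v o - E o o, fun w v => ?_⟩
  simp only [hE]
  rw [← sub_eq_sub_of_apply_eq hφ hΓ.preconnected hE v o (w v) o, add_sub_cancel]

end CutVertices

section Polynomials

variable {V R : Type*} [Fintype V] [CommSemiring R]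

/-- The family of linear polynomials with prescribed coefficients: `φ w v` is the coefficient of
`t_{w(v)}` in the value at `w`. -/
noncomputable def toPoly : (Perm V → V → R) →ₗ[R] Perm V → MvPolynomial V R :=
  LinearMap.pi fun w =>
    Fintype.linearCombination R (fun v => (X (w v) : MvPolynomial V R)) ∘ₗ LinearMap.proj w

lemma toPoly_apply (φ : Perm V → V → R) (w : Perm V) :
    toPoly φ w = ∑ v, φ w v • (X (w v) : MvPolynomial V R) := by
  simp [toPoly, Fintype.linearCombination_apply]

lemma exists_sum_smul_X_eq (w : Perm V) {q : MvPolynomial V R} (hq : q.IsHomogeneous 1) :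
    ∃ c : V → R, ∑ v, c v • (X (w v) : MvPolynomial V R) = q := by
  have hspan : q ∈ Submodule.span R (Set.range ((X : V → MvPolynomial V R) ∘ w)) := by
    rw [w.surjective.range_comp, ← homogeneousSubmodule_one_eq_span_X]
    exact hq
  exact (Submodule.mem_span_range_iff_exists_fun R).1 hspan

lemma exists_toPoly_eq {ρ : Perm V → MvPolynomial V R} (h : ∀ w, (ρ w).IsHomogeneous 1) :
    ∃ φ, toPoly φ = ρ := by
  choose φ hφ using fun w => exists_sum_smul_X_eq w (h w)
  exact ⟨φ, funext fun w => by rw [toPoly_apply, hφ]⟩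

lemma eval_toPoly (φ : Perm V → V → R) (w : Perm V) (e : V → R) :
    eval e (toPoly φ w) = ∑ v, φ w v * e (w v) := by
  simp [toPoly_apply, smul_eval]

end Polynomials

section SpanningFamily

variable {n : ℕ} {Γ : SimpleGraph (Fin n)} {φ : Perm (Fin n) → Fin n → ℂ}

lemma sum_mul_eq_of_isSpline (hφ : IsSpline Γ (toPoly φ)) {i j : Fin n} (hij : Γ.Adj i j)
    {w : Perm (Fin n)} {e : Fin n → ℂ} (he : e (w i) = e (w j)) :
    ∑ v, φ (w * swap i j) v * e ((w * swap i j) v) = ∑ v, φ w v * e (w v) := by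
  obtain ⟨q, hq⟩ := Ideal.mem_span_singleton'.1 (hφ w i j hij)
  have := congrArg (eval e) hq
  simp only [map_mul, map_sub, eval_X, he, sub_self, mul_zero, eval_toPoly] at this
  exact (sub_eq_zero.1 this.symm).symm

lemma mem_splineCoeffs_of_isSpline (hφ : IsSpline Γ (toPoly φ)) : φ ∈ splineCoeffs Γ ℂ := by
  refine fun i j hij => ⟨fun v hvi hvj w => ?_, fun w => ?_⟩
  · have hv : ∀ v', (w * swap i j) v' = w v ↔ v' = v := fun v' => by
      rw [Perm.mul_apply, w.apply_eq_iff_eq, swap_apply_eq_iff, swap_apply_of_ne_of_ne hvi hvj]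
    have := sum_mul_eq_of_isSpline hφ hij (w := w) (e := Pi.single (w v) 1)
      (by simp [hvi.symm, hvj.symm])
    simpa only [Pi.single_apply, hv, w.apply_eq_iff_eq, mul_ite, mul_one, mul_zero,
      Finset.sum_ite_eq', Finset.mem_univ, if_true] using this
  · simpa using sum_mul_eq_of_isSpline hφ hij (w := w) (e := 1) rfl

lemma tbar_mem_spanningFamily (i : Fin n) : tbar i ∈ SpanningFamily Γ :=
  .inl (.inl (.inl ⟨i, rfl⟩))

lemma xbar_mem_spanningFamily (i : Fin n) : xbar i ∈ SpanningFamily Γ :=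
  .inl (.inl (.inr ⟨i, rfl⟩))

lemma toPoly_mem_span_of_apply_eq_add {d c : Fin n → ℂ} (h : ∀ w v, φ w v = d (w v) + c v) :
    toPoly φ ∈ Submodule.span ℂ (SpanningFamily Γ) := by
  have hφ : toPoly φ = ∑ a, d a • tbar a + ∑ v, c v • xbar v := by
    funext w
    simp only [toPoly_apply, h, add_smul, Finset.sum_add_distrib, Pi.add_apply, Finset.sum_apply,
      Pi.smul_apply, tbar, xbar]
    rw [Equiv.sum_comp w fun a => d a • (X a : MvPolynomial (Fin n) ℂ)]
  rw [hφ]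
  exact add_mem
    (sum_mem fun a _ => Submodule.smul_mem _ _ (Submodule.subset_span (tbar_mem_spanningFamily a)))
    (sum_mem fun v _ => Submodule.smul_mem _ _ (Submodule.subset_span (xbar_mem_spanningFamily v)))

lemma fbar_mem_span {i j : Fin n} (hlt : i < j) (hij : Γ.Adj i j) (h : Γ.IsBridge s(i, j))
    (A : Set (Fin n)) : fbar i j A (edgeSide Γ i j) ∈ Submodule.span ℂ (SpanningFamily Γ) := by
  have hG : (edgeSide Γ i j : Set (Fin n)) = {y | (Γ.deleteEdges {s(i, j)}).Reachable i y} :=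
    Set.ext fun _ => mem_edgeSide
  by_cases hA : A.ncard = (edgeSide Γ i j : Set (Fin n)).ncard
  · rw [hG] at hA ⊢
    refine Submodule.subset_span (.inl (.inr ⟨i, j, hlt, hij, fun hconn => ?_, A, hA, rfl⟩))
    exact SimpleGraph.isBridge_iff.1 h (hconn.preconnected i j)
  · have hzero : fbar i j A (edgeSide Γ i j) = 0 := funext fun w => if_neg fun hw => hA <| by
      rw [← hw, Set.ncard_preimage_of_injective_subset_range w.injective (by simp)]
    rw [hzero]
    exact zero_mem _

lemma toPoly_cutEdgeCoeff_mem_span (hφ : φ ∈ splineCoeffs Γ ℂ) (hΓ : Γ.Preconnected)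
    {i j : Fin n} (hlt : i < j) (hij : Γ.Adj i j) (h : Γ.IsBridge s(i, j)) :
    toPoly (cutEdgeCoeff Γ φ i j) ∈ Submodule.span ℂ (SpanningFamily Γ) := by
  let g : Set (Fin n) → ℂ := Function.extend (fun w : Perm (Fin n) => w '' edgeSide Γ i j)
    (fun w => ∑ v ∈ edgeSide Γ i j, φ w v) 0
  have hg : ∀ w : Perm (Fin n), g (w '' edgeSide Γ i j) = ∑ v ∈ edgeSide Γ i j, φ w v :=
    Function.FactorsThrough.extend_apply (fun _ _ => sum_edgeSide_eq_of_image_eq hφ hΓ h) 0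
  have hsum : toPoly (cutEdgeCoeff Γ φ i j) = ∑ A, g A • fbar i j A (edgeSide Γ i j) := by
    funext w
    have himage : ∀ A, w ⁻¹' A = edgeSide Γ i j ↔ A = w '' edgeSide Γ i j :=
      fun A => w.preimage_eq_iff_eq_image A _
    simp only [toPoly_apply, cutEdgeCoeff, Pi.sub_apply, sub_smul, Finset.sum_sub_distrib,
      Finset.sum_apply, Pi.smul_apply, fbar, himage, smul_ite, smul_zero]
    simp [hg, smul_sub, Pi.single_apply, ite_smul]
  rw [hsum]
  exact sum_mem fun A _ => Submodule.smul_mem _ _ (fbar_mem_span hlt hij h A)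

lemma delVertexEdges_eq (p : Fin n) : delVertexEdges Γ p = Γ.deleteIncidenceSet p := by
  ext u v
  simp [delVertexEdges, SimpleGraph.deleteIncidenceSet_adj, eq_comm]

lemma ybar_compl_singleton (p k : Fin n) : ybar p k {p}ᶜ = tbar k - xbar p := by
  funext w
  by_cases hk : w⁻¹ k = p
  · obtain rfl : k = w p := Perm.inv_eq_iff_eq.1 hk
    exact (if_neg (not_not.2 hk)).trans (sub_self _).symm
  · exact if_pos hk

lemma ybar_branch_mem_span (p k : Fin n) (c : (Γ.deleteIncidenceSet p).ConnectedComponent) :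
    ybar p k (branch Γ p c) ∈ Submodule.span ℂ (SpanningFamily Γ) := by
  rcases (branch Γ p c).eq_empty_or_nonempty with hempty | ⟨v, hv⟩
  · have hzero : ybar p k (branch Γ p c) = 0 := funext fun w => if_neg (by simp [hempty])
    rw [hzero]
    exact zero_mem _
  by_cases hconn : (Γ.induce ({p}ᶜ : Set (Fin n))).Connected
  · rw [coe_branch_eq_compl_singleton hconn.preconnected hv, ybar_compl_singleton]
    exact sub_mem (Submodule.subset_span (tbar_mem_spanningFamily k))
      (Submodule.subset_span (xbar_mem_spanningFamily p))
  · rw [coe_branch_eq hv, ← delVertexEdges_eq]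
    exact Submodule.subset_span (.inr ⟨p, hconn, v, (mem_branch.1 hv).1, k, rfl⟩)

lemma sum_smul_ybar (p : Fin n) (G : Finset (Fin n)) (d : Fin n → ℂ)
    (w : Perm (Fin n)) :
    ∑ k, d k • ybar p k G w = ∑ u ∈ G, d (w u) • (X (w u) - X (w p)) := by
  rw [← Equiv.sum_comp w, ← Finset.sum_subset (Finset.subset_univ G)]
  · exact Finset.sum_congr rfl fun u hu => by simp [ybar, hu]
  · exact fun u _ hu => by simp [ybar, hu]

lemma toPoly_cutVertexCoeff (p : Fin n)
    [Fintype (Γ.deleteIncidenceSet p).ConnectedComponent]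
    (d : (Γ.deleteIncidenceSet p).ConnectedComponent → Fin n → ℂ) :
    toPoly (cutVertexCoeff Γ p d) = ∑ c, ∑ k, d c k • ybar p k (branch Γ p c) := by
  funext w
  have hbranch : ∀ c, ∑ u ∈ branch Γ p c, d c (w u) • (X (w u) - X (w p)) =
      ∑ u ∈ branch Γ p c, d ((Γ.deleteIncidenceSet p).connectedComponentMk u) (w u) •
        (X (w u) - X (w p) : MvPolynomial (Fin n) ℂ) :=
    fun c => Finset.sum_congr rfl fun u hu => by rw [(mem_branch.1 hu).2]
  have hcompl : ∑ u ∈ {p}ᶜ, cutVertexCoeff Γ p d w u • (X (w u) : MvPolynomial (Fin n) ℂ) =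
      ∑ u ∈ {p}ᶜ, d ((Γ.deleteIncidenceSet p).connectedComponentMk u) (w u) • X (w u) :=
    Finset.sum_congr rfl fun u hu => by rw [cutVertexCoeff, if_neg (by simpa using hu)]
  simp only [Finset.sum_apply, Pi.smul_apply, sum_smul_ybar, hbranch]
  rw [sum_branch, toPoly_apply, Fintype.sum_eq_add_sum_compl p, hcompl, cutVertexCoeff, if_pos rfl]
  simp only [smul_sub, Finset.sum_sub_distrib, ← Finset.sum_smul]
  module

lemma toPoly_cutVertexCoeff_mem_span (p : Fin n)
    (d : (Γ.deleteIncidenceSet p).ConnectedComponent → Fin n → ℂ) :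
    toPoly (cutVertexCoeff Γ p d) ∈ Submodule.span ℂ (SpanningFamily Γ) := by
  have := Fintype.ofFinite (Γ.deleteIncidenceSet p).ConnectedComponent
  rw [toPoly_cutVertexCoeff]
  exact sum_mem fun c _ => sum_mem fun k _ =>
    Submodule.smul_mem _ _ (ybar_branch_mem_span p k c)

end SpanningFamily

end LinearSpline

open LinearSpline

/-- Every spline on a connected graph `Γ` all of whose values are homogeneous linear (or
zero) is a `ℂ`-linear combination of the splines in `F_Γ`. -/
theorem linear_splines_spanned {n : ℕ} (Γ : SimpleGraph (Fin n)) (hΓ : Γ.Connected)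
    (ρ : Equiv.Perm (Fin n) → MvPolynomial (Fin n) ℂ)
    (hρ : IsSpline Γ ρ) (hlin : ∀ w, (ρ w).IsHomogeneous 1) :
    ρ ∈ Submodule.span ℂ (SpanningFamily Γ) := by
  obtain ⟨φ, rfl⟩ := exists_toPoly_eq hlin
  have hφ := mem_splineCoeffs_of_isSpline hρ
  have hφ₁ := sub_sum_cutEdgeCoeff_mem_splineCoeffs hφ
  have hflat := isBridgeFlat_sub_sum_cutEdgeCoeff hφ
  obtain ⟨d, E, hE⟩ := exists_sub_sum_cutVertexCoeff_apply hφ₁ hΓ hflat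
  have hφ₂ := sub_mem hφ₁ (sum_mem (t := .univ) fun p _ => cutVertexCoeff_mem_splineCoeffs p (d p))
  obtain ⟨a, b, hab⟩ := exists_apply_eq_add hφ₂ hΓ hE
  let S := (Submodule.span ℂ (SpanningFamily Γ)).comap toPoly
  have hEdges : ∑ e ∈ cutEdges Γ, cutEdgeCoeff Γ φ e.1 e.2 ∈ S := sum_mem fun e he =>
    have ⟨hlt, hadj, hbridge⟩ := mem_cutEdges.1 he
    toPoly_cutEdgeCoeff_mem_span hφ hΓ.preconnected hlt hadj hbridge
  have hVertices : ∑ p, cutVertexCoeff Γ p (d p) ∈ S :=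
    sum_mem fun p _ => toPoly_cutVertexCoeff_mem_span p (d p)
  have hrest : φ - ∑ e ∈ cutEdges Γ, cutEdgeCoeff Γ φ e.1 e.2 -
      ∑ p, cutVertexCoeff Γ p (d p) ∈ S := toPoly_mem_span_of_apply_eq_add hab
  exact (S.sub_mem_iff_left hEdges).1 ((S.sub_mem_iff_left hVertices).1 hrest)
end
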